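/- Let a ∈ (1, 2] satisfy (2a-1)(2a^2 + 7a - 4) ≥ 27. Then f_a, as a map from [-a, 2] to itself, is Li-Yorke chaotic: (1) for every positive integer k there exists a point x ∈ [-a, 2] with f_a^{(k)}(x) = x and f_a^{(i)}(x) ≠ x for all 1 ≤ i ≤ k-1; and (2) there is an uncountable set S ⊆ [-a, 2] containing no periodic points of f_a such that for all p, q ∈ S with p ≠ q, limsup_{t→∞} |f_a^{(t)}(p) - f_a^{(t)}(q)| > 0 and liminf_{t→∞} |f_a^{(t)}(p) - f_a^{(t)}(q)| = 0, and for every p ∈ S and every periodic point q ∈ [-a, 2] of f_a, limsup_{t→∞} |f_a^{(t)}(p) - f_a^{(t)}(q)| > 0. -/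

import Mathlib

/-!
The polynomial identities `f_a(z) + a = (z + a)(z - 1)²` and `f_a(z) - 2 = (z - 2)(z² + az + 1)`
show that `f_a` fixes `-a`, preserves `[-a, 2]`, and sends `1` to `-a`. Its local maximum is at
`c = (1 - 2a)/3 < 0`, and the numerical hypothesis on `a` says exactly that `f_a(c) ≥ 1`. Hence the
disjoint intervals `L = [-a, c]` and `R = [0, 1]` satisfy `f_a(L) ⊇ L ∪ R` and `f_a(R) ⊇ L`, so
every sequence of letters `L`, `R` without two consecutive `R`s is the itinerary of some point
(`exists_itinerary`).

*Periods.* For `k ≥ 2`, monotonicity of `f_a` on `L` and on `R` together with the intermediate value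
theorem gives a point `x ∈ R` with `f_a^k(x) = x` whose other iterates lie in `L`; since `L` and `R`
are disjoint, its least period is `k`.

*Scrambled set.* A set `A ⊆ ℕ` is encoded by an itinerary whose letters `R` occur only at the times
`(k + 1)²`, each element of `ℕ` being tested for membership in `A` at infinitely many of these
times. Different itineraries separate orbits by the gap `-c` between `L` and `R`. On the other hand
the distance to `-a` is expanded on `L` by a factor at least `16/9`, so the growing common blocks of
`L`s push all these orbits towards `-a` at common times (`add_le_of_block`), which makes them
proximal. The orbit of a periodic point other than `-a` stays away from `-a`, which coded orbits
approach infinitely often, and the fixed point `-a` itself is far from `R`, which coded orbits visit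
infinitely often; so no coded orbit is asymptotic to a periodic one.
-/

open Filter

/-- The cubic map `f_a(z) = z * g_a(z)` with `g_a(z) = z^2 + (a-2)z + 1 - 2a`. -/
noncomputable def fa (a z : ℝ) : ℝ := z * (z ^ 2 + (a - 2) * z + 1 - 2 * a)

/-- `x` is a periodic point of `f_a` (in `[-a,2]`): some positive iterate fixes it. -/
def IsPeriodicPoint (a x : ℝ) : Prop := ∃ k : ℕ, 0 < k ∧ (fa a)^[k] x = x

/-! ### Elementary facts on the cubic -/

lemma fa_add (a z : ℝ) : fa a z + a = (z + a) * (z - 1) ^ 2 := by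
  unfold fa; ring

lemma fa_sub_two (a z : ℝ) : fa a z - 2 = (z - 2) * (z ^ 2 + a * z + 1) := by
  unfold fa; ring

lemma fa_neg (a : ℝ) : fa a (-a) = -a := by
  unfold fa; ring

lemma fa_zero (a : ℝ) : fa a 0 = 0 := by
  unfold fa; ring

lemma fa_one (a : ℝ) : fa a 1 = -a := by
  unfold fa; ring

lemma continuous_fa (a : ℝ) : Continuous (fa a) := by
  unfold fa; fun_prop

lemma iterate_fa_neg (a : ℝ) (n : ℕ) : (fa a)^[n] (-a) = -a :=
  Function.iterate_fixed (fa_neg a) n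

lemma fa_mem {a z : ℝ} (ha₀ : 1 < a) (ha₁ : a ≤ 2) (hz : z ∈ Set.Icc (-a) 2) :
    fa a z ∈ Set.Icc (-a) 2 := by
  obtain ⟨h1, h2⟩ := hz
  have e1 := fa_add a z
  have e2 := fa_sub_two a z
  have h3 : 0 ≤ (z + a) * (z - 1) ^ 2 := mul_nonneg (by linarith) (sq_nonneg _)
  have h4 : 0 ≤ z ^ 2 + a * z + 1 := by nlinarith [sq_nonneg (z + a / 2)]
  have h5 : (z - 2) * (z ^ 2 + a * z + 1) ≤ 0 :=
    mul_nonpos_of_nonpos_of_nonneg (by linarith) h4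
  exact ⟨by linarith, by linarith⟩

lemma iterate_fa_mem {a z : ℝ} (ha₀ : 1 < a) (ha₁ : a ≤ 2) (hz : z ∈ Set.Icc (-a) 2) (n : ℕ) :
    (fa a)^[n] z ∈ Set.Icc (-a) 2 :=
  Set.MapsTo.iterate (fun _ h => fa_mem ha₀ ha₁ h) n hz

/-- The numerical condition on `a` says that the local maximum of `f_a` is at least `1`. -/
lemma one_le_fa_crit {a : ℝ} (ha₂ : 27 ≤ (2 * a - 1) * (2 * a ^ 2 + 7 * a - 4)) :
    1 ≤ fa a ((1 - 2 * a) / 3) := by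
  have : fa a ((1 - 2 * a) / 3) - 1 = ((2 * a - 1) * (2 * a ^ 2 + 7 * a - 4) - 27) / 27 := by
    unfold fa; ring
  linarith

lemma fa_mono_left {a x y : ℝ} (ha₀ : 1 < a) (hxy : x ≤ y) (hy : y ≤ (1 - 2 * a) / 3) :
    fa a x ≤ fa a y := by
  have e : fa a y - fa a x = (y - x) * ((1 - y) * (1 - 2 * a - 3 * y) +
      (y - x) * ((y - x) + (1 - 2 * a - 3 * y) + (a + 1))) := by unfold fa; ring
  have h1 : 0 ≤ 1 - 2 * a - 3 * y := by linarith
  have h2 : 0 ≤ y - x := by linarith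
  have h3 : 0 ≤ 1 - y := by linarith
  have h4 : 0 ≤ a + 1 := by linarith
  have : 0 ≤ fa a y - fa a x := by rw [e]; positivity
  linarith

lemma fa_anti_right {a x y : ℝ} (ha₀ : 1 < a) (hx : 0 ≤ x) (hxy : x ≤ y) (hy : y ≤ 1) :
    fa a y ≤ fa a x := by
  have h : x ^ 2 + x * y + y ^ 2 + (a - 2) * (x + y) + 1 - 2 * a ≤ 0 := by
    nlinarith [mul_nonneg hx (sub_nonneg.2 hy), mul_nonneg (hx.trans hxy) (sub_nonneg.2 hy),
      mul_nonneg hx (sub_nonneg.2 (hxy.trans hy))]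
  have e : fa a y - fa a x =
      (y - x) * (x ^ 2 + x * y + y ^ 2 + (a - 2) * (x + y) + 1 - 2 * a) := by unfold fa; ring
  have := mul_nonpos_of_nonneg_of_nonpos (sub_nonneg.2 hxy) h
  linarith

/-- `f_a(L) ⊇ [-a, 1]`. -/
lemma exists_left {a y : ℝ} (ha₀ : 1 < a)
    (ha₂ : 27 ≤ (2 * a - 1) * (2 * a ^ 2 + 7 * a - 4)) (hy : y ∈ Set.Icc (-a) 1) :
    ∃ x ∈ Set.Icc (-a) ((1 - 2 * a) / 3), fa a x = y := by
  have := intermediate_value_Icc (a := -a) (b := (1 - 2 * a) / 3) (by linarith)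
    (continuous_fa a).continuousOn
  rw [fa_neg] at this
  exact this ⟨hy.1, hy.2.trans (one_le_fa_crit ha₂)⟩

/-- `f_a(R) ⊇ [-a, 0]`. -/
lemma exists_right {a y : ℝ} (hy : y ∈ Set.Icc (-a) 0) :
    ∃ x ∈ Set.Icc (0 : ℝ) 1, fa a x = y := by
  have := intermediate_value_Icc' (a := (0 : ℝ)) (b := 1) zero_le_one
    (continuous_fa a).continuousOn
  rw [fa_zero, fa_one] at this
  exact this hy

/-! ### Points of every period -/

/-- The point `p` is the image of `1` under `m` applications of the inverse branch of `f_a` with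
values in `L`. -/
lemma exists_left_chain {a : ℝ} (ha₀ : 1 < a)
    (ha₂ : 27 ≤ (2 * a - 1) * (2 * a ^ 2 + 7 * a - 4)) (m : ℕ) :
    ∃ p ∈ Set.Icc (-a) 1, (1 ≤ m → p ≤ (1 - 2 * a) / 3) ∧ (fa a)^[m] p = 1 ∧
      ∀ x ∈ Set.Icc (-a) p, ∀ i < m, (fa a)^[i] x ∈ Set.Icc (-a) ((1 - 2 * a) / 3) := by
  induction m with
  | zero => exact ⟨1, ⟨by linarith, le_rfl⟩, by simp, rfl, by simp⟩
  | succ m ih =>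
    obtain ⟨p, hp, -, hp1, hpi⟩ := ih
    obtain ⟨q, hq, hqp⟩ := exists_left ha₀ ha₂ hp
    refine ⟨q, ⟨hq.1, by linarith [hq.2]⟩, fun _ => hq.2, ?_, ?_⟩
    · rw [Function.iterate_succ_apply, hqp, hp1]
    · intro x hx i hi
      cases i with
      | zero => exact ⟨hx.1, hx.2.trans hq.2⟩
      | succ i =>
        rw [Function.iterate_succ_apply]
        refine hpi _ ⟨?_, ?_⟩ i (by omega)
        · rw [← fa_neg a]; exact fa_mono_left ha₀ hx.1 (hx.2.trans hq.2)
        · rw [← hqp]; exact fa_mono_left ha₀ hx.2 hq.2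

lemma exists_period {a : ℝ} (ha₀ : 1 < a)
    (ha₂ : 27 ≤ (2 * a - 1) * (2 * a ^ 2 + 7 * a - 4)) (k : ℕ) (hk : 0 < k) :
    ∃ x ∈ Set.Icc (-a) (2 : ℝ),
      (fa a)^[k] x = x ∧ ∀ i : ℕ, 1 ≤ i → i ≤ k - 1 → (fa a)^[i] x ≠ x := by
  obtain ⟨m, rfl⟩ : ∃ m, k = m + 1 := ⟨k - 1, by omega⟩
  rcases Nat.eq_zero_or_pos m with rfl | hm
  · exact ⟨-a, ⟨le_rfl, by linarith⟩, iterate_fa_neg a 1, fun i h1 h2 => by omega⟩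
  obtain ⟨p, hp, hpc, hp1, hpi⟩ := exists_left_chain ha₀ ha₂ m
  obtain ⟨r, hr, hrp⟩ := exists_right (a := a) ⟨hp.1, by linarith [hpc hm]⟩
  have hcont : ContinuousOn (fun x => (fa a)^[m + 1] x - x) (Set.Icc r 1) :=
    (((continuous_fa a).iterate _).sub continuous_id).continuousOn
  -- `f_a^{m+1}` sends `r` to `1` and `1` to `-a`, so it crosses the diagonal on `[r, 1]`.
  have h0 : (0 : ℝ) ∈ Set.Icc ((fa a)^[m + 1] 1 - 1) ((fa a)^[m + 1] r - r) := by
    rw [Function.iterate_succ_apply, Function.iterate_succ_apply, hrp, hp1, fa_one,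
      iterate_fa_neg]
    exact ⟨by linarith, by linarith [hr.2]⟩
  obtain ⟨x, hx, hx0⟩ := intermediate_value_Icc' hr.2 hcont h0
  refine ⟨x, ⟨by linarith [hr.1, hx.1], by linarith [hx.2]⟩, by simpa [sub_eq_zero] using hx0, ?_⟩
  intro i hi1 hi2 hix
  obtain ⟨j, rfl⟩ : ∃ j, i = j + 1 := ⟨i - 1, by omega⟩
  have hfx : fa a x ∈ Set.Icc (-a) p := by
    constructor
    · rw [← fa_one a]; exact fa_anti_right ha₀ (hr.1.trans hx.1) hx.2 le_rfl
    · rw [← hrp]; exact fa_anti_right ha₀ hr.1 hx.1 hx.2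
  have := (hpi _ hfx j (by omega)).2
  rw [← Function.iterate_succ_apply, hix] at this
  linarith [hr.1, hx.1]

/-! ### Itineraries -/

/-- The interval `R = [0, 1]` if `P` holds and `L = [-a, c]` otherwise, where `c = (1 - 2a)/3` is
the critical point at which `f_a` has its local maximum. -/
def cell (a : ℝ) (P : Prop) : Set ℝ :=
  {x | (P → x ∈ Set.Icc (0 : ℝ) 1) ∧ (¬P → x ∈ Set.Icc (-a) ((1 - 2 * a) / 3))}

lemma cell_of {a : ℝ} {P : Prop} (h : P) : cell a P = Set.Icc 0 1 := by
  ext; simp [cell, h]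

lemma cell_of_not {a : ℝ} {P : Prop} (h : ¬P) :
    cell a P = Set.Icc (-a) ((1 - 2 * a) / 3) := by
  ext; simp [cell, h]

lemma isCompact_cell (a : ℝ) (P : Prop) : IsCompact (cell a P) := by
  by_cases h : P
  · rw [cell_of h]; exact isCompact_Icc
  · rw [cell_of_not h]; exact isCompact_Icc

lemma cell_subset {a : ℝ} (ha₀ : 1 < a) (P : Prop) : cell a P ⊆ Set.Icc (-a) 1 := by
  by_cases h : P
  · rw [cell_of h]; exact Set.Icc_subset_Icc (by linarith) le_rfl
  · rw [cell_of_not h]; exact Set.Icc_subset_Icc le_rfl (by linarith)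

lemma exists_cell {a y : ℝ} (ha₀ : 1 < a)
    (ha₂ : 27 ≤ (2 * a - 1) * (2 * a ^ 2 + 7 * a - 4)) {P Q : Prop} (hPQ : P → ¬Q)
    (hy : y ∈ cell a Q) : ∃ x ∈ cell a P, fa a x = y := by
  by_cases h : P
  · rw [cell_of_not (hPQ h)] at hy
    rw [cell_of h]
    exact exists_right ⟨hy.1, by linarith [hy.2]⟩
  · rw [cell_of_not h]
    exact exists_left ha₀ ha₂ (cell_subset ha₀ Q hy)

lemma exists_finite_itinerary {a : ℝ} (ha₀ : 1 < a)
    (ha₂ : 27 ≤ (2 * a - 1) * (2 * a ^ 2 + 7 * a - 4)) (n : ℕ) :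
    ∀ s : ℕ → Prop, (∀ i, s i → ¬s (i + 1)) → ∃ x, ∀ i ≤ n, (fa a)^[i] x ∈ cell a (s i) := by
  induction n with
  | zero =>
    intro s _
    have : ∃ x, x ∈ cell a (s 0) := by
      by_cases h : s 0
      · exact ⟨0, by rw [cell_of h]; simp⟩
      · exact ⟨-a, by rw [cell_of_not h]; exact ⟨le_rfl, by linarith⟩⟩
    obtain ⟨x, hx⟩ := this
    refine ⟨x, fun i hi => ?_⟩
    obtain rfl : i = 0 := by omega
    exact hx
  | succ n ih =>
    intro s hs
    obtain ⟨y, hy⟩ := ih (fun i => s (i + 1)) (fun i => hs (i + 1))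
    obtain ⟨x, hx, hxy⟩ := exists_cell ha₀ ha₂ (hs 0) (hy 0 (Nat.zero_le _))
    refine ⟨x, fun i hi => ?_⟩
    cases i with
    | zero => exact hx
    | succ i =>
      rw [Function.iterate_succ_apply, hxy]
      exact hy i (by omega)

/-- Every sequence without two consecutive letters `R` is the itinerary of some point. -/
lemma exists_itinerary {a : ℝ} (ha₀ : 1 < a)
    (ha₂ : 27 ≤ (2 * a - 1) * (2 * a ^ 2 + 7 * a - 4)) (s : ℕ → Prop)
    (hs : ∀ i, s i → ¬s (i + 1)) : ∃ x, ∀ i, (fa a)^[i] x ∈ cell a (s i) := by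
  have hcl : ∀ n, IsClosed {x | ∀ i ≤ n, (fa a)^[i] x ∈ cell a (s i)} := by
    intro n
    simp only [Set.ofPred_forall]
    exact isClosed_iInter fun i => isClosed_iInter fun _ =>
      (isCompact_cell a (s i)).isClosed.preimage ((continuous_fa a).iterate i)
  have hne := IsCompact.nonempty_iInter_of_sequence_nonempty_isCompact_isClosed
    (fun n => {x | ∀ i ≤ n, (fa a)^[i] x ∈ cell a (s i)})
    (fun n x hx i hi => hx i (by omega))
    (fun n => exists_finite_itinerary ha₀ ha₂ n s hs)
    ((isCompact_cell a (s 0)).of_isClosed_subset (hcl 0) (fun x hx => hx 0 le_rfl))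
    hcl
  obtain ⟨x, hx⟩ := hne
  exact ⟨x, fun i => Set.mem_iInter.1 hx i i le_rfl⟩

/-- An orbit in `[-a, 2]` that spends `m` consecutive steps in `L` starts within `4 (9/16)^m` of the
repelling fixed point `-a`. -/
lemma add_le_of_block {a x : ℝ} (ha₀ : 1 < a) (ha₁ : a ≤ 2) (hx : x ∈ Set.Icc (-a) 2) (m : ℕ)
    (h : ∀ i < m, (fa a)^[i] x ∈ Set.Icc (-a) ((1 - 2 * a) / 3)) :
    x + a ≤ 4 * (9 / 16) ^ m := by
  induction m generalizing x with
  | zero => linarith [hx.2]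
  | succ m ih =>
    have h1 := ih (fa_mem ha₀ ha₁ hx) (fun i hi => by
      rw [← Function.iterate_succ_apply]; exact h _ (by omega))
    have h0 : x ∈ Set.Icc (-a) ((1 - 2 * a) / 3) := h 0 (Nat.succ_pos _)
    have h2 : 16 / 9 ≤ (x - 1) ^ 2 := by nlinarith [h0.2]
    have h3 := mul_le_mul_of_nonneg_left h2 (by linarith [h0.1] : 0 ≤ x + a)
    rw [fa_add] at h1
    rw [pow_succ]
    linarith

/-- Points with different letters are separated by the gap between `L` and `R`. -/
lemma cell_dist {a x y : ℝ} (ha₀ : 1 < a) {P Q : Prop} (hPQ : ¬(P ↔ Q))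
    (hx : x ∈ cell a P) (hy : y ∈ cell a Q) : 1 / 3 ≤ |x - y| := by
  by_cases hP : P
  · have hQ : ¬Q := fun hQ => hPQ ⟨fun _ => hQ, fun _ => hP⟩
    rw [cell_of hP] at hx
    rw [cell_of_not hQ] at hy
    exact le_trans (by linarith [hx.1, hy.2]) (le_abs_self _)
  · have hQ : Q := by tauto
    rw [cell_of_not hP] at hx
    rw [cell_of hQ] at hy
    exact le_trans (by linarith [hx.2, hy.1]) (neg_le_abs _)

/-! ### The coding sequences -/

/-- The coding sequence of `A ⊆ ℕ`: the letter at time `n` is `R` only if `n = (k + 1)²`, and then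
the first component of `k` under the pairing bijection decides: `0` always gives `R`, and `i + 1`
gives `R` exactly when `i ∈ A`. -/
def code (A : Set ℕ) (n : ℕ) : Prop :=
  ∃ k : ℕ, n = (k + 1) ^ 2 ∧ (k.unpair.1 = 0 ∨ k.unpair.1 - 1 ∈ A)

lemma code_sq (A : Set ℕ) (i j : ℕ) :
    code A ((Nat.pair i j + 1) ^ 2) ↔ (i = 0 ∨ i - 1 ∈ A) := by
  constructor
  · rintro ⟨k, hk, h⟩
    have : Nat.pair i j = k := by
      have := Nat.pow_left_injective (two_ne_zero) hk
      omega
    subst this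
    simpa using h
  · intro h
    exact ⟨_, rfl, by simpa using h⟩

/-- Between consecutive squares a coding sequence has only letters `L`. -/
lemma not_code_block (A : Set ℕ) (m i : ℕ) (hi : i < m) : ¬code A ((m + 1) ^ 2 + 1 + i) := by
  rintro ⟨k, hk, -⟩
  have h1 : m + 1 < k + 1 := by
    by_contra! h
    have := Nat.pow_le_pow_left h 2
    omega
  have h2 : (m + 2) ^ 2 ≤ (k + 1) ^ 2 := Nat.pow_le_pow_left (by omega) 2
  nlinarith

lemma code_succ (A : Set ℕ) (n : ℕ) (h : code A n) : ¬code A (n + 1) := by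
  rintro ⟨l, hl, -⟩
  obtain ⟨k, hk, -⟩ := h
  have h1 : k + 1 < l + 1 := by
    by_contra! h
    have := Nat.pow_le_pow_left h 2
    omega
  have h2 : (k + 2) ^ 2 ≤ (l + 1) ^ 2 := Nat.pow_le_pow_left (by omega) 2
  nlinarith

lemma le_sq_pair (i j : ℕ) : j ≤ (Nat.pair i j + 1) ^ 2 := by
  have := Nat.right_le_pair i j
  nlinarith

lemma frequently_code (A : Set ℕ) : ∃ᶠ n in atTop, code A n :=
  frequently_atTop.2 fun j => ⟨_, le_sq_pair 0 j, (code_sq A 0 j).2 (Or.inl rfl)⟩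

lemma frequently_code_ne {A B : Set ℕ} (h : A ≠ B) :
    ∃ᶠ n in atTop, ¬(code A n ↔ code B n) := by
  obtain ⟨m, hm⟩ : ∃ m, ¬(m ∈ A ↔ m ∈ B) := by
    by_contra! hh
    exact h (Set.ext hh)
  refine frequently_atTop.2 fun j => ⟨_, le_sq_pair (m + 1) j, ?_⟩
  rw [code_sq, code_sq]
  simpa using hm

/-! ### Upper and lower limits of distances -/

lemma abs_iterate_le {a p q : ℝ} (ha₀ : 1 < a) (ha₁ : a ≤ 2) (hp : p ∈ Set.Icc (-a) 2)
    (hq : q ∈ Set.Icc (-a) 2) (t : ℕ) : |(fa a)^[t] p - (fa a)^[t] q| ≤ 4 := by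
  have h1 := iterate_fa_mem ha₀ ha₁ hp t
  have h2 := iterate_fa_mem ha₀ ha₁ hq t
  rw [abs_le]
  exact ⟨by linarith [h1.1, h2.2], by linarith [h1.2, h2.1]⟩

lemma limsup_pos {a p q δ : ℝ} (ha₀ : 1 < a) (ha₁ : a ≤ 2) (hp : p ∈ Set.Icc (-a) 2)
    (hq : q ∈ Set.Icc (-a) 2) (hδ : 0 < δ)
    (h : ∃ᶠ t in atTop, δ ≤ |(fa a)^[t] p - (fa a)^[t] q|) :
    0 < limsup (fun t : ℕ => |(fa a)^[t] p - (fa a)^[t] q|) atTop :=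
  hδ.trans_le (le_limsup_of_frequently_le h
    (isBoundedUnder_of ⟨4, abs_iterate_le ha₀ ha₁ hp hq⟩))

lemma liminf_eq_zero {u : ℕ → ℝ} (hu : ∀ t, 0 ≤ u t)
    (h : ∀ ε > 0, ∃ᶠ t in atTop, u t ≤ ε) : liminf u atTop = 0 := by
  apply le_antisymm
  · refine le_of_forall_pos_le_add fun ε hε => ?_
    rw [zero_add]
    exact liminf_le_of_frequently_le (h ε hε) (isBoundedUnder_of ⟨0, hu⟩)
  · exact le_liminf_of_le (IsCoboundedUnder.of_frequently_le (h 1 one_pos))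
      (Eventually.of_forall hu)

/-- The orbit of a periodic point other than `-a` stays away from the fixed point `-a`. -/
lemma exists_gap {a q : ℝ} (hq : IsPeriodicPoint a q) (hqa : q ≠ -a) :
    ∃ ε > 0, ∀ t, ε ≤ |(fa a)^[t] q + a| := by
  obtain ⟨k, hk, hkq⟩ := hq
  have hne : ∀ t, (fa a)^[t] q ≠ -a := by
    intro t ht
    apply hqa
    have h1 : (fa a)^[k * t] q = q := by
      rw [Function.iterate_mul]; exact Function.iterate_fixed hkq t
    have h2 : t ≤ k * t := Nat.le_mul_of_pos_left t hk
    rw [← h1, ← Nat.sub_add_cancel h2, Function.iterate_add_apply, ht, iterate_fa_neg]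
  obtain ⟨i, -, hi⟩ := Finset.exists_min_image (Finset.range k) (fun t => |(fa a)^[t] q + a|)
    ⟨0, Finset.mem_range.2 hk⟩
  refine ⟨|(fa a)^[i] q + a|, abs_pos.2 fun h => hne i (by linarith), fun t => ?_⟩
  rw [← Function.IsPeriodicPt.iterate_mod_apply (f := fa a) (n := k) hkq t]
  exact hi _ (Finset.mem_range.2 (Nat.mod_lt _ hk))

/-- Along the times `(m + 1)² + 1`, which do not depend on `A`, every coded orbit tends to `-a`. -/
lemma eventually_near {a x : ℝ} (ha₀ : 1 < a) (ha₁ : a ≤ 2) (hx : x ∈ Set.Icc (-a) 2)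
    {A : Set ℕ} (h : ∀ i, (fa a)^[i] x ∈ cell a (code A i)) {ε : ℝ} (hε : 0 < ε) :
    ∀ᶠ m : ℕ in atTop, (fa a)^[(m + 1) ^ 2 + 1] x + a ≤ ε := by
  have hlim : Tendsto (fun m : ℕ => 4 * (9 / 16 : ℝ) ^ m) atTop (nhds 0) := by
    simpa using (tendsto_pow_atTop_nhds_zero_of_lt_one (r := (9 / 16 : ℝ)) (by norm_num)
      (by norm_num)).const_mul 4
  filter_upwards [hlim.eventually_le_const hε] with m hm
  refine le_trans (add_le_of_block ha₀ ha₁ (iterate_fa_mem ha₀ ha₁ hx _) m fun i hi => ?_) hm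
  have := h ((m + 1) ^ 2 + 1 + i)
  rwa [cell_of_not (not_code_block A m i hi), add_comm, Function.iterate_add_apply] at this

lemma tendsto_times : Tendsto (fun m : ℕ => (m + 1) ^ 2 + 1) atTop atTop :=
  tendsto_atTop_mono (fun m => by rw [id]; nlinarith) tendsto_id

/-- For `a ∈ (1, 2]` with `(2a-1)(2a²+7a-4) ≥ 27`, the map `f_a : [-a,2] → [-a,2]`
is Li–Yorke chaotic: (1) for every `k ≥ 1` there is a point of period exactly `k`
in `[-a, 2]`; (2) there is an uncountable scrambled set `S ⊆ [-a, 2]` containing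
no periodic points. -/
theorem cubic_liyorke_chaotic (a : ℝ) (ha₀ : 1 < a) (ha₁ : a ≤ 2)
    (ha₂ : 27 ≤ (2 * a - 1) * (2 * a ^ 2 + 7 * a - 4)) :
    (∀ k : ℕ, 0 < k → ∃ x ∈ Set.Icc (-a) (2 : ℝ),
      (fa a)^[k] x = x ∧ ∀ i : ℕ, 1 ≤ i → i ≤ k - 1 → (fa a)^[i] x ≠ x) ∧
    (∃ S : Set ℝ, S ⊆ Set.Icc (-a) (2 : ℝ) ∧ ¬ S.Countable ∧
      (∀ p ∈ S, ¬ IsPeriodicPoint a p) ∧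
      (∀ p ∈ S, ∀ q ∈ S, p ≠ q →
        0 < limsup (fun t : ℕ => |(fa a)^[t] p - (fa a)^[t] q|) atTop ∧
        liminf (fun t : ℕ => |(fa a)^[t] p - (fa a)^[t] q|) atTop = 0) ∧
      (∀ p ∈ S, ∀ q ∈ Set.Icc (-a) (2 : ℝ), IsPeriodicPoint a q →
        0 < limsup (fun t : ℕ => |(fa a)^[t] p - (fa a)^[t] q|) atTop)) := by
  have key := fun A : Set ℕ => exists_itinerary ha₀ ha₂ (code A) (code_succ A)
  choose x hx using key
  have hxm : ∀ A, x A ∈ Set.Icc (-a) 2 := fun A =>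
    Set.Icc_subset_Icc le_rfl one_le_two (cell_subset ha₀ _ (hx A 0))
  have hsep : ∀ {A B : Set ℕ}, A ≠ B →
      ∃ᶠ t in atTop, 1 / 3 ≤ |(fa a)^[t] (x A) - (fa a)^[t] (x B)| := fun {A B} hAB =>
    (frequently_code_ne hAB).mono fun t ht => cell_dist ha₀ ht (hx A t) (hx B t)
  have hinj : Function.Injective x := by
    intro A B hAB
    by_contra hne
    obtain ⟨t, ht⟩ := (hsep hne).exists
    rw [hAB, sub_self, abs_zero] at ht
    norm_num at ht
  have hper : ∀ A, ∀ q ∈ Set.Icc (-a) (2 : ℝ), IsPeriodicPoint a q →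
      0 < limsup (fun t : ℕ => |(fa a)^[t] (x A) - (fa a)^[t] q|) atTop := by
    intro A q hq hqp
    by_cases hqa : q = -a
    · refine limsup_pos ha₀ ha₁ (hxm A) hq one_pos ((frequently_code A).mono fun t ht => ?_)
      have h := hx A t
      rw [cell_of ht] at h
      rw [hqa, iterate_fa_neg]
      exact le_trans (by linarith [h.1]) (le_abs_self _)
    · obtain ⟨ε, hε, hgap⟩ := exists_gap hqp hqa
      refine limsup_pos ha₀ ha₁ (hxm A) hq (half_pos hε) (tendsto_times.frequently ?_)
      refine (Eventually.mono (eventually_near ha₀ ha₁ (hxm A) (hx A) (half_pos hε))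
        fun m hm => ?_).frequently
      have h1 := hgap ((m + 1) ^ 2 + 1)
      have h2 := (iterate_fa_mem ha₀ ha₁ hq ((m + 1) ^ 2 + 1)).1
      rw [abs_of_nonneg (by linarith)] at h1
      exact le_trans (by linarith) (neg_le_abs _)
  refine ⟨exists_period ha₀ ha₂, Set.range x, ?_, ?_, ?_, ?_, ?_⟩
  · rintro _ ⟨A, rfl⟩
    exact hxm A
  · intro hc
    have : Countable (Set ℕ) := by
      have := hc.to_subtype
      exact (Set.rangeFactorization_injective.2 hinj).countable
    obtain ⟨g, hg⟩ := exists_injective_nat (Set ℕ)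
    exact Function.cantor_injective g hg
  · rintro _ ⟨A, rfl⟩ hp
    -- For `q = p` the distances in `hper` are all `0`.
    have := hper A _ (hxm A) hp
    simp at this
  · rintro _ ⟨A, rfl⟩ _ ⟨B, rfl⟩ hne
    have hAB : A ≠ B := fun h => hne (h ▸ rfl)
    refine ⟨limsup_pos ha₀ ha₁ (hxm A) (hxm B) (by norm_num) (hsep hAB),
      liminf_eq_zero (fun _ => abs_nonneg _) fun ε hε => tendsto_times.frequently ?_⟩
    refine Eventually.frequently ?_
    filter_upwards [eventually_near ha₀ ha₁ (hxm A) (hx A) hε,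
      eventually_near ha₀ ha₁ (hxm B) (hx B) hε] with m hA hB
    have h1 := (iterate_fa_mem ha₀ ha₁ (hxm A) ((m + 1) ^ 2 + 1)).1
    have h2 := (iterate_fa_mem ha₀ ha₁ (hxm B) ((m + 1) ^ 2 + 1)).1
    rw [abs_le]
    exact ⟨by linarith, by linarith⟩
  · rintro _ ⟨A, rfl⟩
    exact hper A
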